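/- Let N ≥ 5 and let p ∈ (0,∞) satisfy p > 2N−2 if N is even, and p > 2N−4 if N is odd. Then X_N^(h) satisfies FP_{p,N,2}(X_N^(h)) ≤ FP_{p,N,2}(X) for every X ∈ S(N,2), and every X ∈ S(N,2) attaining equality is equivalent to X_N^(h). -/

import Mathlib

open scoped RealInnerProductSpace
open Real

/-- `X_N^(h)`: the `N`-tuple of unit vectors `(cos(kπ/N), sin(kπ/N))`, `k = 0,…,N−1`,
i.e. `N` equally spaced points on the half circle. -/
noncomputable def halfCircle (N : ℕ) : Fin N → EuclideanSpace ℝ (Fin 2) :=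
  fun k => (WithLp.equiv 2 (Fin 2 → ℝ)).symm
    ![cos ((k : ℕ) * π / N), sin ((k : ℕ) * π / N)]

/-- Two configurations are equivalent if one is obtained from the other by an orthogonal
transformation, a permutation of the points, and sign switches. -/
def EquivConfig (d N : ℕ) (X Y : Fin N → EuclideanSpace ℝ (Fin d)) : Prop :=
  ∃ (U : EuclideanSpace ℝ (Fin d) ≃ₗᵢ[ℝ] EuclideanSpace ℝ (Fin d))
    (σ : Equiv.Perm (Fin N)) (s : Fin N → ℝ),
    (∀ i, s i = 1 ∨ s i = -1) ∧ ∀ i, Y i = s i • U (X (σ i))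

/-- The `p`-frame potential `FP_{p,N,d}(X) = Σ_{k≠ℓ} |⟨x_k,x_ℓ⟩|^p`. -/
noncomputable def framePotential (d N : ℕ) (p : ℝ)
    (X : Fin N → EuclideanSpace ℝ (Fin d)) : ℝ :=
  ∑ k : Fin N, ∑ l : Fin N, if k ≠ l then |⟪X k, X l⟫| ^ p else 0

/-!
Up to sign, unit vectors of the plane are angles modulo `π`, and the potential is the energy of
the interaction `|cos x| ^ p` summed over all differences of angles. Since `∑ cos (2s(θ_k - θ_l))`
is the squared modulus of `∑ exp (2isθ_k)`, which vanishes at the equispaced angles for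
`0 < |s| < N`, these angles minimize the energy of every nonnegative combination of the
interactions `cos (2sx)` with `|s| < N`. It therefore suffices to write `|cos x| ^ p` as such a
combination plus a nonnegative function whose zeros are exactly the differences of distinct
equispaced angles.

In the variable `t = 4 cos² x` the combination is, up to a power of `2`, the Hermite interpolant
of `t ^ (p / 2)` at these differences; for even `N` one of them is `t = 0`, where only the value
is interpolated, and a factor `t` is split off first. The coefficients of Newton's form are
divided differences, and they are positive because `p` is large enough for the derivatives
involved to be positive. The products of `t - aᵢ` in Newton's form are products of translated
cosines, which the `q`-binomial theorem at the root of unity `q = exp (2πi / N)` expands into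
cosines with positive coefficients.
-/

open Finset.HasAntidiagonal (antidiagonal mem_antidiagonal)

section Dslope

lemma analyticAt_dslope {f : ℝ → ℝ} {a t : ℝ} (ha : AnalyticAt ℝ f a) (ht : AnalyticAt ℝ f t) :
    AnalyticAt ℝ (dslope f a) t := by
  rcases eq_or_ne t a with rfl | hne
  · obtain ⟨q, hq⟩ := ha
    exact hq.has_fpower_series_dslope_fslope.analyticAt
  · refine AnalyticAt.congr ?_ (dslope_eventuallyEq_slope_of_ne f hne).symm
    exact ((analyticAt_id.sub analyticAt_const).inv (sub_ne_zero.2 hne)).smul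
      (ht.sub analyticAt_const)

lemma iteratedDeriv_succ_sub_mul {f : ℝ → ℝ} {t : ℝ} (hf : AnalyticAt ℝ f t) (a : ℝ) (i : ℕ) :
    iteratedDeriv (i + 1) (fun x ↦ (x - a) * f x) t =
      (t - a) * iteratedDeriv (i + 1) f t + (i + 1) * iteratedDeriv i f t := by
  have hlin (k : ℕ) : iteratedDeriv (k + 2) (fun x : ℝ ↦ x - a) = 0 := by
    ext; simp [iteratedDeriv_succ']
  rw [iteratedDeriv_fun_mul (by fun_prop) hf.contDiffAt, Finset.sum_range_succ',
    Finset.sum_range_succ']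
  simp [hlin]
  ring

lemma iteratedDeriv_succ_eq_dslope {f : ℝ → ℝ} {a t : ℝ} (ha : AnalyticAt ℝ f a)
    (ht : AnalyticAt ℝ f t) (i : ℕ) :
    iteratedDeriv (i + 1) f t =
      (t - a) * iteratedDeriv (i + 1) (dslope f a) t +
        (i + 1) * iteratedDeriv i (dslope f a) t := by
  rw [← iteratedDeriv_succ_sub_mul (analyticAt_dslope ha ht), iteratedDeriv_succ',
    iteratedDeriv_succ']
  congr 1
  ext x
  simp [← smul_eq_mul]

lemma iteratedDeriv_dslope_pos {f : ℝ → ℝ} {a t : ℝ} {i : ℕ}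
    (hf : ∀ x ∈ Set.uIcc a t, AnalyticAt ℝ f x)
    (hpos : ∀ x ∈ Set.uIcc a t, 0 < iteratedDeriv (i + 1) f x) :
    0 < iteratedDeriv i (dslope f a) t := by
  let u : ℝ → ℝ := fun s ↦ AffineMap.lineMap a t s
  have hu (s : ℝ) (hs : s ∈ Set.Icc 0 1) : u s ∈ Set.uIcc a t := by
    rw [← segment_eq_uIcc, segment_eq_image_lineMap]
    exact Set.mem_image_of_mem _ hs
  let φ (s : ℝ) : ℝ := s ^ (i + 1) * iteratedDeriv i (dslope f a) (u s)
  have hφ (s : ℝ) (hs : s ∈ Set.Icc 0 1) :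
      HasDerivAt φ (s ^ i * iteratedDeriv (i + 1) f (u s)) s := by
    have hfa := hf a Set.left_mem_uIcc
    have hfu := hf _ (hu s hs)
    have hR : HasDerivAt (iteratedDeriv i (dslope f a))
        (iteratedDeriv (i + 1) (dslope f a) (u s)) (u s) := by
      rw [iteratedDeriv_succ, iteratedDeriv_eq_iterate]
      exact ((analyticAt_dslope hfa hfu).iterated_deriv i).differentiableAt.hasDerivAt
    refine ((hasDerivAt_pow (i + 1) s).mul
      (hR.comp s AffineMap.hasDerivAt_lineMap)).congr_deriv ?_
    rw [iteratedDeriv_succ_eq_dslope hfa hfu]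
    simp [u, AffineMap.lineMap_apply]
    ring
  have hmono : StrictMonoOn φ (Set.Icc 0 1) := by
    refine strictMonoOn_of_deriv_pos (convex_Icc 0 1)
      (fun s hs ↦ (hφ s hs).continuousAt.continuousWithinAt) fun s hs ↦ ?_
    rw [interior_Icc] at hs
    have hs' := Set.Ioo_subset_Icc_self hs
    rw [(hφ s hs').deriv]
    exact mul_pos (pow_pos hs.1 i) (hpos _ (hu s hs'))
  simpa [φ, u] using hmono (by simp) (by simp) zero_lt_one

end Dslope

/-- Strict absolute monotonicity up to order `n` on `(b, ∞)`, for functions continuous up to `b`.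
The derivatives may blow up at `b`, as those of `t ^ r` do at `0`; analyticity is the form of
smoothness that passes to `dslope`. -/
structure StrictAbsMono (n : ℕ) (b : ℝ) (g : ℝ → ℝ) : Prop where
  continuousOn : ContinuousOn g (Set.Ici b)
  analyticAt : ∀ t, b < t → AnalyticAt ℝ g t
  iteratedDeriv_pos : ∀ i ≤ n, ∀ t, b < t → 0 < iteratedDeriv i g t

namespace StrictAbsMono

variable {n : ℕ} {a b t : ℝ} {g : ℝ → ℝ}

lemma pos (h : StrictAbsMono n b g) (ht : b < t) : 0 < g t := by
  simpa using h.iteratedDeriv_pos 0 n.zero_le t ht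

protected lemma dslope (h : StrictAbsMono (n + 1) b g) (ha : b < a) :
    StrictAbsMono n b (dslope g a) where
  continuousOn := (continuousOn_dslope (Ici_mem_nhds ha)).2
    ⟨h.continuousOn, (h.analyticAt a ha).differentiableAt⟩
  analyticAt t ht := analyticAt_dslope (h.analyticAt a ha) (h.analyticAt t ht)
  iteratedDeriv_pos i hi t ht := by
    have hab : ∀ x ∈ Set.uIcc a t, b < x := fun x hx ↦ (lt_min ha ht).trans_le hx.1
    exact iteratedDeriv_dslope_pos (fun x hx ↦ h.analyticAt x (hab x hx))
      fun x hx ↦ h.iteratedDeriv_pos (i + 1) (by gcongr) x (hab x hx)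

lemma strictMonoOn (h : StrictAbsMono (n + 1) b g) : StrictMonoOn g (Set.Ici b) := by
  refine strictMonoOn_of_deriv_pos (convex_Ici b) h.continuousOn fun x hx ↦ ?_
  rw [interior_Ici] at hx
  simpa using h.iteratedDeriv_pos 1 (by lia) x hx

lemma dslope_pos (h : StrictAbsMono (n + 1) b g) (ha : b < a) (ht : b ≤ t) :
    0 < dslope g a t := by
  rcases eq_or_ne t a with rfl | hne
  · exact (h.dslope ha).pos ha
  · rw [dslope_of_ne g hne]
    exact h.strictMonoOn.slope_pos ha.le ht hne.symm

end StrictAbsMono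

lemma strictAbsMono_rpow {n : ℕ} {r : ℝ} (hr₀ : 0 ≤ r) (hr : (n : ℝ) - 1 < r) :
    StrictAbsMono n 0 (· ^ r) where
  continuousOn := (continuous_rpow_const hr₀).continuousOn
  analyticAt t ht := (contDiffAt_rpow_const_of_ne ht.ne').analyticAt
  iteratedDeriv_pos i hi t ht := by
    have hir : (i : ℝ) - 1 < r := by
      have : (i : ℝ) ≤ n := by exact_mod_cast hi
      linarith
    rw [iteratedDeriv_eq_iterate, Real.iter_deriv_rpow_const]
    exact mul_pos (descPochhammer_pos hir) (rpow_pos_of_pos ht _)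

section Hermite

variable (g : ℝ → ℝ) (a : ℕ → ℝ)

/-- The iterated divided difference `t ↦ g[a₀, a₀, …, aⱼ₋₁, aⱼ₋₁, t]`, which is the remainder
factor of double-node Hermite interpolation of `g` at `a₀, …, aⱼ₋₁`. -/
noncomputable def hermiteQuotient : ℕ → ℝ → ℝ
  | 0 => g
  | j + 1 => dslope (dslope (hermiteQuotient j) (a j)) (a j)

/-- The monic polynomial function with simple zeros at the first `j` nodes `a₀, …, aⱼ₋₁`. -/
def nodalProd (j : ℕ) (t : ℝ) : ℝ := ∏ i ∈ Finset.range j, (t - a i)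

/-- Newton's form of the polynomial that interpolates `g` to first order at `a₀, …, aₘ₋₁`. -/
noncomputable def hermiteInterpolant (m : ℕ) (t : ℝ) : ℝ :=
  ∑ j ∈ Finset.range m, (hermiteQuotient g a j (a j) * nodalProd a j t ^ 2 +
    deriv (hermiteQuotient g a j) (a j) * (nodalProd a j t * nodalProd a (j + 1) t))

lemma eq_hermiteInterpolant_add (m : ℕ) (t : ℝ) :
    g t = hermiteInterpolant g a m t + hermiteQuotient g a m t * nodalProd a m t ^ 2 := by
  induction m with
  | zero => simp [hermiteInterpolant, hermiteQuotient, nodalProd]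
  | succ m ih =>
    have hfst := sub_smul_dslope (hermiteQuotient g a m) (a m) t
    have hsnd := sub_smul_dslope (dslope (hermiteQuotient g a m) (a m)) (a m) t
    rw [ih, hermiteInterpolant, hermiteInterpolant, Finset.sum_range_succ, hermiteQuotient]
    rw [smul_eq_mul] at hfst hsnd
    rw [dslope_same] at hsnd
    simp only [nodalProd, Finset.prod_range_succ]
    linear_combination (∏ i ∈ Finset.range m, (t - a i)) ^ 2 * (-hfst - (t - a m) * hsnd)

variable {g a} {b : ℝ}

protected lemma StrictAbsMono.hermiteQuotient {n : ℕ} (m : ℕ) (hg : StrictAbsMono (n + 2 * m) b g)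
    (ha : ∀ j < m, b < a j) : StrictAbsMono n b (hermiteQuotient g a m) := by
  induction m generalizing n with
  | zero => exact hg
  | succ m ih =>
    have hm := ha m m.lt_succ_self
    have hprev := ih (n := n + 2) (by convert hg using 1; ring) fun j hj ↦ ha j (by lia)
    exact (hprev.dslope hm).dslope hm

lemma StrictAbsMono.hermiteQuotient_succ_pos {m : ℕ} {t : ℝ}
    (hg : StrictAbsMono (2 * (m + 1)) b g) (ha : ∀ j ≤ m, b < a j) (ht : b ≤ t) :
    0 < hermiteQuotient g a (m + 1) t := by
  have hm := ha m le_rfl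
  have hprev : StrictAbsMono 2 b (hermiteQuotient g a m) :=
    StrictAbsMono.hermiteQuotient m (by convert hg using 1; ring) fun j hj ↦ ha j hj.le
  exact (hprev.dslope hm).dslope_pos hm ht

end Hermite

section SinBinomial

/-- The `q`-factorial at `q = exp (2 * δ * I)`, normalized to be real. -/
noncomputable def sinFactorial (δ : ℝ) (n : ℕ) : ℝ :=
  ∏ i ∈ Finset.range n, sin ((i + 1) * δ)

/-- The `q`-binomial coefficient `i + j` choose `i` at `q = exp (2 * δ * I)`, normalized to be real
and indexed symmetrically so that no natural subtraction occurs. -/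
noncomputable def sinBinom (δ : ℝ) (i j : ℕ) : ℝ :=
  sinFactorial δ (i + j) / (sinFactorial δ i * sinFactorial δ j)

/-- The product of `2 * cos` over the `n` translates of `θ` by steps of `δ` centred at `θ`. -/
noncomputable def cosProd (δ : ℝ) (n : ℕ) (θ : ℝ) : ℝ :=
  ∏ l ∈ Finset.range n, 2 * cos (θ + (l - (n - 1) / 2) * δ)

variable {δ : ℝ} {i j n : ℕ}

lemma sinFactorial_succ (δ : ℝ) (n : ℕ) :
    sinFactorial δ (n + 1) = sinFactorial δ n * sin ((n + 1) * δ) :=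
  Finset.prod_range_succ _ _

lemma sinFactorial_pos (hδ : 0 < δ) (hn : n * δ < π) : 0 < sinFactorial δ n := by
  refine Finset.prod_pos fun i hi ↦ sin_pos_of_pos_of_lt_pi (by positivity) ?_
  have hin : (i : ℝ) + 1 ≤ n := by exact_mod_cast Finset.mem_range.1 hi
  exact (mul_le_mul_of_nonneg_right hin hδ.le).trans_lt hn

lemma sinBinom_comm (δ : ℝ) (i j : ℕ) : sinBinom δ i j = sinBinom δ j i := by
  rw [sinBinom, sinBinom, add_comm i j, mul_comm (sinFactorial δ i)]

lemma sinBinom_nonneg (hδ : 0 < δ) (hn : ((i + j : ℕ) : ℝ) * δ < π) : 0 ≤ sinBinom δ i j := by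
  have hpos {m : ℕ} (hm : m ≤ i + j) : 0 < sinFactorial δ m :=
    sinFactorial_pos hδ (lt_of_le_of_lt (by gcongr) hn)
  exact div_nonneg (hpos le_rfl).le (mul_pos (hpos (by lia)) (hpos (by lia))).le

lemma sin_mul_sinBinom_succ_left (h : sin ((i + 1) * δ) ≠ 0) :
    sin ((i + 1) * δ) * sinBinom δ (i + 1) j = sin ((i + j + 1) * δ) * sinBinom δ i j := by
  rw [sinBinom, sinBinom, add_right_comm, sinFactorial_succ, sinFactorial_succ]
  push_cast
  field_simp

lemma cosProd_succ (δ : ℝ) (n : ℕ) (θ : ℝ) :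
    cosProd δ (n + 1) θ = cosProd δ n (θ - δ / 2) * (2 * cos (θ + n * δ / 2)) := by
  rw [cosProd, Finset.prod_range_succ, cosProd]
  congr! 3
  · congr 1
    push_cast
    ring
  · push_cast
    ring

lemma cosProd_succ' (δ : ℝ) (n : ℕ) (θ : ℝ) :
    cosProd δ (n + 1) θ = 2 * cos (θ - n * δ / 2) * cosProd δ n (θ + δ / 2) := by
  rw [cosProd, Finset.prod_range_succ', cosProd, mul_comm]
  congr! 3
  · push_cast
    ring
  · congr 1
    push_cast
    ring

lemma cosProd_add_two (δ : ℝ) (n : ℕ) (θ : ℝ) :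
    cosProd δ (n + 2) θ = cosProd δ n θ * (4 * cos θ ^ 2 - (2 - 2 * cos ((n + 1) * δ))) := by
  have hends : 2 * cos (θ - (n + 1) * δ / 2) * (2 * cos (θ + (n + 1) * δ / 2)) =
      4 * cos θ ^ 2 - (2 - 2 * cos ((n + 1) * δ)) := by
    have hhalf : ((n : ℝ) + 1) * δ = 2 * ((n + 1) * δ / 2) := by ring
    rw [cos_sub, cos_add, congrArg cos hhalf, cos_two_mul]
    linear_combination (-4 * sin ((n + 1) * δ / 2) ^ 2) * sin_sq_add_cos_sq θ +
      (4 * cos θ ^ 2 - 4) * sin_sq_add_cos_sq ((n + 1) * δ / 2)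
  rw [← hends, cosProd_succ', cosProd_succ, add_sub_cancel_right]
  push_cast
  ring_nf

lemma sum_antidiagonal_succ_sinBinom_mul_sin_fst (h : ∀ i ≤ n, sin ((i + 1) * δ) ≠ 0)
    (f : ℕ × ℕ → ℝ) :
    ∑ x ∈ antidiagonal (n + 1), sinBinom δ x.1 x.2 * (sin (x.1 * δ) * f x) =
      sin ((n + 1) * δ) * ∑ x ∈ antidiagonal n, sinBinom δ x.1 x.2 * f (x.1 + 1, x.2) := by
  rw [Finset.Nat.sum_antidiagonal_succ, Finset.mul_sum]
  simp only [Nat.cast_zero, zero_mul, sin_zero, mul_zero, zero_add]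
  refine Finset.sum_congr rfl fun x hx ↦ ?_
  obtain rfl := mem_antidiagonal.1 hx
  push_cast
  linear_combination f (x.1 + 1, x.2) *
    sin_mul_sinBinom_succ_left (j := x.2) (h x.1 (Nat.le_add_right ..))

lemma sum_antidiagonal_succ_sinBinom_mul_sin_snd (h : ∀ i ≤ n, sin ((i + 1) * δ) ≠ 0)
    (f : ℕ × ℕ → ℝ) :
    ∑ x ∈ antidiagonal (n + 1), sinBinom δ x.1 x.2 * (sin (x.2 * δ) * f x) =
      sin ((n + 1) * δ) * ∑ x ∈ antidiagonal n, sinBinom δ x.1 x.2 * f (x.1, x.2 + 1) := by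
  rw [← Finset.Nat.sum_antidiagonal_swap, ← Finset.Nat.sum_antidiagonal_swap (n := n)]
  simpa [sinBinom_comm δ] using
    sum_antidiagonal_succ_sinBinom_mul_sin_fst h (f ∘ Prod.swap)

/-- A real form of the `q`-binomial theorem; the phase `φ` carries the real and imaginary parts. -/
lemma sum_sinBinom_mul_cos (h : ∀ i < n, sin ((i + 1) * δ) ≠ 0) (θ φ : ℝ) :
    ∑ x ∈ antidiagonal n, sinBinom δ x.1 x.2 * cos ((x.1 - x.2) * θ + φ) =
      cosProd δ n θ * cos φ := by
  induction n generalizing θ φ with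
  | zero => simp [sinBinom, cosProd, sinFactorial]
  | succ n ih =>
    have h' : ∀ i ≤ n, sin ((i + 1) * δ) ≠ 0 := fun i hi ↦ h i (Nat.lt_succ_of_le hi)
    replace ih := ih fun i hi ↦ h i (Nat.lt_succ_of_lt hi)
    have hangle (x : ℕ × ℕ) (ψ : ℝ) : sin ((x.1 + x.2) * δ) * cos ψ =
        sin (x.1 * δ) * cos (ψ + x.2 * δ) + sin (x.2 * δ) * cos (ψ - x.1 * δ) := by
      rw [add_mul, sin_add, cos_add, cos_sub]
      ring
    refine mul_left_cancel₀ (h' n le_rfl) ?_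
    calc sin ((n + 1) * δ) * ∑ x ∈ antidiagonal (n + 1),
          sinBinom δ x.1 x.2 * cos ((x.1 - x.2) * θ + φ)
        = ∑ x ∈ antidiagonal (n + 1), sinBinom δ x.1 x.2 *
            (sin (x.1 * δ) * cos ((x.1 - x.2) * θ + φ + x.2 * δ) +
              sin (x.2 * δ) * cos ((x.1 - x.2) * θ + φ - x.1 * δ)) := by
          rw [Finset.mul_sum]
          refine Finset.sum_congr rfl fun x hx ↦ ?_
          have hx' : (x.1 : ℝ) + x.2 = n + 1 := by exact_mod_cast mem_antidiagonal.1 hx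
          rw [← hangle, hx', mul_left_comm]
      _ = sin ((n + 1) * δ) *
            (∑ x ∈ antidiagonal n, sinBinom δ x.1 x.2 *
                cos ((x.1 - x.2) * (θ - δ / 2) + (θ + n * δ / 2 + φ)) +
              ∑ x ∈ antidiagonal n, sinBinom δ x.1 x.2 *
                cos ((x.1 - x.2) * (θ - δ / 2) + (φ - (θ + n * δ / 2)))) := by
          simp only [mul_add, Finset.sum_add_distrib,
            sum_antidiagonal_succ_sinBinom_mul_sin_fst h',
            sum_antidiagonal_succ_sinBinom_mul_sin_snd h']
          congr! 5 with x hx x hx <;> rw [← mem_antidiagonal.1 hx] <;> push_cast <;> ring_nf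
      _ = sin ((n + 1) * δ) * (cosProd δ (n + 1) θ * cos φ) := by
          rw [ih, ih, cosProd_succ, cos_add _ φ, cos_sub]
          ring

lemma cosProd_mul_cosProd {a b : ℕ} (ha : ∀ i < a, sin ((i + 1) * δ) ≠ 0)
    (hb : ∀ i < b, sin ((i + 1) * δ) ≠ 0) :
    (fun x ↦ cosProd δ a x * cosProd δ b x) =
      ∑ y ∈ antidiagonal b, ∑ z ∈ antidiagonal a,
        (sinBinom δ y.1 y.2 * sinBinom δ z.1 z.2) •
          fun x ↦ cos ((z.1 - z.2 + (y.1 - y.2)) * x) := by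
  ext x
  have hφ := sum_sinBinom_mul_cos hb x 0
  simp only [add_zero, cos_zero, mul_one] at hφ
  rw [← hφ, Finset.mul_sum]
  simp only [Finset.sum_apply, Pi.smul_apply, smul_eq_mul, mul_assoc, ← Finset.mul_sum, add_mul,
    sum_sinBinom_mul_cos ha, mul_left_comm]

end SinBinomial

section Energy

/-- The energy of a configuration of angles, summed over ordered pairs, for a pair interaction `W`
that depends only on the difference of the two angles. -/
def pairEnergy {ι : Type*} [Fintype ι] [DecidableEq ι] (W : ℝ → ℝ) (θ : ι → ℝ) : ℝ :=
  ∑ x ∈ Finset.univ.offDiag, W (θ x.1 - θ x.2)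

lemma pairEnergy_add {ι : Type*} [Fintype ι] [DecidableEq ι] (V W : ℝ → ℝ) (θ : ι → ℝ) :
    pairEnergy (fun t ↦ V t + W t) θ = pairEnergy V θ + pairEnergy W θ :=
  Finset.sum_add_distrib

/-- The angles of `N` equally spaced points on the half circle. -/
noncomputable def equispacedAngles (N : ℕ) (k : Fin N) : ℝ := k * π / N

/-- The convex cone of interactions whose energy is minimal at the equispaced angles. -/
def equispacedCone (N : ℕ) : PointedCone ℝ (ℝ → ℝ) where
  carrier := {W | ∀ θ : Fin N → ℝ, pairEnergy W (equispacedAngles N) ≤ pairEnergy W θ}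
  zero_mem' θ := by simp [pairEnergy]
  add_mem' {V W} hV hW θ :=
    (pairEnergy_add V W _).trans_le
      ((add_le_add (hV θ) (hW θ)).trans_eq (pairEnergy_add V W θ).symm)
  smul_mem' c W hW θ := by
    simpa [pairEnergy, ← Finset.smul_sum] using smul_le_smul_of_nonneg_left (hW θ) zero_le

lemma mem_equispacedCone {N : ℕ} {W : ℝ → ℝ} : W ∈ equispacedCone N ↔
    ∀ θ : Fin N → ℝ, pairEnergy W (equispacedAngles N) ≤ pairEnergy W θ :=
  Iff.rfl

lemma pairEnergy_cos_mul {ι : Type*} [Fintype ι] [DecidableEq ι] (c : ℝ) (θ : ι → ℝ) :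
    pairEnergy (fun t ↦ cos (c * t)) θ =
      (∑ k, cos (c * θ k)) ^ 2 + (∑ k, sin (c * θ k)) ^ 2 - Fintype.card ι := by
  have hfull : ∑ x : ι × ι, cos (c * (θ x.1 - θ x.2)) =
      (∑ k, cos (c * θ k)) ^ 2 + (∑ k, sin (c * θ k)) ^ 2 := by
    simp only [mul_sub, cos_sub, Finset.sum_add_distrib, Fintype.sum_prod_type, sq,
      Finset.sum_mul_sum]
  rw [← hfull, ← Finset.univ_product_univ, ← Finset.diag_union_offDiag,
    Finset.sum_union (Finset.disjoint_diag_offDiag _)]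
  simp [pairEnergy]

lemma sum_exp_equispacedAngles {N : ℕ} [NeZero N] {s : ℤ} (hs : ¬ (N : ℤ) ∣ s) :
    ∑ k, Complex.exp ((2 * s * equispacedAngles N k : ℝ) * Complex.I) = 0 := by
  have hN : (N : ℂ) ≠ 0 := NeZero.ne _
  set ζ := Complex.exp (2 * π * Complex.I * (s / N)) with hζ
  have hterm (k : Fin N) :
      Complex.exp ((2 * s * equispacedAngles N k : ℝ) * Complex.I) = ζ ^ (k : ℕ) := by
    rw [hζ, ← Complex.exp_nat_mul, equispacedAngles]
    push_cast
    congr 1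
    ring
  have hroot : ζ ^ N = 1 := by
    rw [hζ, ← Complex.exp_nat_mul, Complex.exp_eq_one_iff]
    exact ⟨s, by field_simp⟩
  have hne : ζ ≠ 1 := by
    intro h
    obtain ⟨z, hz⟩ := Complex.exp_eq_one_iff.1 h
    rw [mul_comm, mul_left_inj' Complex.two_pi_I_ne_zero, div_eq_iff hN] at hz
    exact hs ⟨z, by rw [mul_comm]; exact_mod_cast hz⟩
  simp only [hterm]
  rw [Fin.sum_univ_eq_sum_range (ζ ^ ·), geom_sum_eq hne, hroot, sub_self, zero_div]

lemma cos_two_mul_mem_equispacedCone {N : ℕ} [NeZero N] {s : ℤ} (hs : (N : ℤ) ∣ s → s = 0) :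
    (fun t ↦ cos (2 * s * t)) ∈ equispacedCone N := by
  rcases eq_or_ne s 0 with rfl | hs₀
  · simp [mem_equispacedCone, pairEnergy]
  intro θ
  have hsum := sum_exp_equispacedAngles (mt hs hs₀)
  have hcos : ∑ k, cos (2 * s * equispacedAngles N k) = 0 := by
    simpa [-Complex.ofReal_mul, Complex.exp_ofReal_mul_I_re] using congrArg Complex.re hsum
  have hsin : ∑ k, sin (2 * s * equispacedAngles N k) = 0 := by
    simpa [-Complex.ofReal_mul, Complex.exp_ofReal_mul_I_im] using congrArg Complex.im hsum
  rw [pairEnergy_cos_mul, pairEnergy_cos_mul, hcos, hsin, zero_pow two_ne_zero, add_zero]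
  exact sub_le_sub_right (by positivity) _

lemma natCast_mul_pi_div_lt_pi {n N : ℕ} (h : n < N) : n * (π / N) < π := by
  have hN : (0 : ℝ) < N := by exact_mod_cast n.zero_le.trans_lt h
  rw [mul_div_left_comm]
  exact mul_lt_of_lt_one_right pi_pos ((div_lt_one hN).2 (by exact_mod_cast h))

lemma cosProd_mul_cosProd_mem_equispacedCone {N a b : ℕ} (ha : a < N) (hb : b < N)
    (hab : Even (a + b)) :
    (fun x ↦ cosProd (π / N) a x * cosProd (π / N) b x) ∈ equispacedCone N := by
  have : NeZero N := ⟨by lia⟩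
  have hδ : 0 < π / N := div_pos pi_pos (by exact_mod_cast NeZero.pos N)
  have hsin {n : ℕ} (hn : n < N) : ∀ i < n, sin ((i + 1) * (π / N)) ≠ 0 := fun i hi ↦ by
    refine (sin_pos_of_pos_of_lt_pi (by positivity) ?_).ne'
    exact_mod_cast natCast_mul_pi_div_lt_pi (n := i + 1) (by lia)
  rw [cosProd_mul_cosProd (hsin ha) (hsin hb)]
  refine sum_mem fun y hy ↦ sum_mem fun z hz ↦ ?_
  rw [mem_antidiagonal] at hy hz
  refine PointedCone.smul_mem _ (mul_nonneg
    (sinBinom_nonneg hδ (natCast_mul_pi_div_lt_pi (by lia)))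
    (sinBinom_nonneg hδ (natCast_mul_pi_div_lt_pi (by lia)))) ?_
  obtain ⟨c, hc⟩ := hab
  have hfreq : ((z.1 : ℝ) - z.2 + (y.1 - y.2)) = 2 * ((z.1 + y.1 - c : ℤ) : ℝ) := by
    have : (z.1 : ℝ) + z.2 + (y.1 + y.2) = c + c := by exact_mod_cast (by lia)
    push_cast
    linear_combination -this
  rw [hfreq]
  refine cos_two_mul_mem_equispacedCone fun hdvd ↦ Int.eq_zero_of_abs_lt_dvd hdvd ?_
  rw [abs_lt]
  lia

lemma cosProd_pi_div_eq_zero_iff {N : ℕ} [NeZero N] {x : ℝ} :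
    cosProd (π / N) (N - 1) x = 0 ↔ ∃ y : ℤ, ¬ (N : ℤ) ∣ y ∧ x = y * (π / N) := by
  have hN : (N : ℝ) ≠ 0 := NeZero.ne _
  have hpos := NeZero.pos N
  have hfactor (l : ℕ) (z : ℤ) : x + (l - ((N - 1 : ℕ) - 1) / 2) * (π / N) = (2 * z + 1) * π / 2 ↔
      x = (((z + 1) * N - (l + 1) : ℤ) : ℝ) * (π / N) := by
    rw [Nat.cast_pred hpos, ← sub_eq_zero, ← sub_eq_zero (a := x)]
    congr! 1
    push_cast
    field_simp
    ring
  simp only [cosProd, Finset.prod_eq_zero_iff, mul_eq_zero, two_ne_zero, false_or, cos_eq_zero_iff,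
    hfactor, Finset.mem_range]
  constructor
  · rintro ⟨l, hl, z, hx⟩
    refine ⟨_, fun hdvd ↦ ?_, hx⟩
    rw [dvd_sub_right (dvd_mul_left ..)] at hdvd
    have := Int.le_of_dvd (by positivity) hdvd
    lia
  · rintro ⟨y, hy, rfl⟩
    have hmod_pos : 0 < -y % N := by
      refine (Int.emod_nonneg _ (by lia)).lt_of_ne' fun h ↦ hy ?_
      exact (dvd_neg.1 (Int.dvd_of_emod_eq_zero h))
    have hmod_lt := Int.emod_lt_of_pos (-y) (b := N) (by lia)
    refine ⟨(-y % N - 1).toNat, by lia, -(-y / N) - 1, ?_⟩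
    congr 2
    rw [Int.toNat_of_nonneg (by lia)]
    linear_combination Int.emod_add_mul_ediv (-y) N

end Energy

section Minorant

/-- The zeros of `cosProd δ (2 * j + e)` with `e ≤ 1`, in the variable `4 * cos θ ^ 2`. -/
noncomputable def cosNode (δ : ℝ) (e i : ℕ) : ℝ := 2 - 2 * cos ((2 * i + e + 1) * δ)

lemma cosNode_pi_div_pos {N e j : ℕ} (h : 2 * j + e + 1 < N) : 0 < cosNode (π / N) e j := by
  have hN : (0 : ℝ) < N := by exact_mod_cast (Nat.zero_le _).trans_lt h
  have hlt := natCast_mul_pi_div_lt_pi h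
  push_cast at hlt
  have hpos : 0 < (2 * j + e + 1) * (π / N) := by positivity
  have hcos : cos ((2 * j + e + 1) * (π / N)) ≠ 1 := fun hone ↦ hpos.ne'
    ((cos_eq_one_iff_of_lt_of_lt (by linarith) (by linarith)).1 hone)
  rw [cosNode]
  linarith [(cos_le_one ((2 * j + e + 1) * (π / N))).lt_of_ne hcos]

lemma cosProd_two_mul_add (δ : ℝ) (e j : ℕ) (θ : ℝ) :
    cosProd δ (2 * j + e) θ = cosProd δ e θ * nodalProd (cosNode δ e) j (4 * cos θ ^ 2) := by
  induction j with
  | zero => simp [nodalProd]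
  | succ j ih =>
    rw [show 2 * (j + 1) + e = 2 * j + e + 2 by ring, cosProd_add_two, ih, nodalProd, nodalProd,
      Finset.prod_range_succ, cosNode]
    push_cast
    ring

lemma cosProd_sq {e : ℕ} (he : e ≤ 1) (δ θ : ℝ) : cosProd δ e θ ^ 2 = (4 * cos θ ^ 2) ^ e := by
  interval_cases e
  · simp [cosProd]
  · simp [cosProd]
    ring

lemma pow_mul_hermiteInterpolant_mem_equispacedCone {g : ℝ → ℝ} {N m e : ℕ}
    (hg : StrictAbsMono (2 * m) 0 g) (he : e ≤ 1) (hN : 2 * m + e < N) :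
    (fun x ↦ (4 * cos x ^ 2) ^ e *
      hermiteInterpolant g (cosNode (π / N) e) m (4 * cos x ^ 2)) ∈ equispacedCone N := by
  set δ := π / N
  have hnode (j : ℕ) (hj : j < m) : 0 < cosNode δ e j := cosNode_pi_div_pos (by lia)
  have hexpand : (fun x ↦ (4 * cos x ^ 2) ^ e *
        hermiteInterpolant g (cosNode δ e) m (4 * cos x ^ 2)) =
      ∑ j ∈ Finset.range m,
        (hermiteQuotient g (cosNode δ e) j (cosNode δ e j) •
            (fun x ↦ cosProd δ (2 * j + e) x * cosProd δ (2 * j + e) x) +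
          deriv (hermiteQuotient g (cosNode δ e) j) (cosNode δ e j) •
            (fun x ↦ cosProd δ (2 * j + e) x * cosProd δ (2 * (j + 1) + e) x)) := by
    ext x
    simp only [Finset.sum_apply, Pi.add_apply, Pi.smul_apply, smul_eq_mul, cosProd_two_mul_add,
      hermiteInterpolant, Finset.mul_sum, ← cosProd_sq he δ x]
    refine Finset.sum_congr rfl fun j _ ↦ ?_
    ring
  rw [hexpand]
  refine sum_mem fun j hj ↦ ?_
  rw [Finset.mem_range] at hj
  have hquot : StrictAbsMono (2 * (m - j)) 0 (hermiteQuotient g (cosNode δ e) j) :=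
    StrictAbsMono.hermiteQuotient j (by rwa [← mul_add, Nat.sub_add_cancel hj.le])
      fun i hi ↦ hnode i (hi.trans hj)
  have hderiv : 0 < deriv (hermiteQuotient g (cosNode δ e) j) (cosNode δ e j) := by
    simpa using hquot.iteratedDeriv_pos 1 (by lia) _ (hnode j hj)
  exact add_mem
    (PointedCone.smul_mem _ (hquot.pos (hnode j hj)).le
      (cosProd_mul_cosProd_mem_equispacedCone (by lia) (by lia) ⟨2 * j + e, rfl⟩))
    (PointedCone.smul_mem _ hderiv.le
      (cosProd_mul_cosProd_mem_equispacedCone (by lia) (by lia) ⟨2 * j + e + 1, by ring⟩))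

lemma abs_cos_rpow {r : ℝ} (hr : 0 ≤ r) (e : ℕ) (x : ℝ) :
    |cos x| ^ (2 * (e + r)) =
      2⁻¹ ^ (2 * (e + r)) * ((4 * cos x ^ 2) ^ e * (4 * cos x ^ 2) ^ r) := by
  have hsq : 4 * cos x ^ 2 = (2 * |cos x|) ^ (2 : ℝ) := by
    rw [rpow_two, mul_pow, sq_abs]
    norm_num
  rw [← rpow_natCast _ e, ← rpow_add_of_nonneg (by positivity) e.cast_nonneg hr, hsq,
    ← rpow_mul (by positivity), ← mul_rpow (by norm_num) (by positivity),
    inv_mul_cancel_left₀ two_ne_zero]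

lemma exists_abs_cos_rpow_eq_add {N : ℕ} (hN : 3 ≤ N) {p : ℝ} (hp : 2 * (N : ℝ) - 4 < p) :
    ∃ H ∈ equispacedCone N, ∃ R : ℝ → ℝ, (∀ x, 0 < R x) ∧
      ∀ x, |cos x| ^ p = H x + R x * cosProd (π / N) (N - 1) x ^ 2 := by
  obtain ⟨m, e, he, rfl⟩ : ∃ m e, e ≤ 1 ∧ N = 2 * (m + 1) + e + 1 :=
    ⟨(N - 3) / 2, (N - 3) % 2, by lia, by lia⟩
  obtain ⟨r, rfl⟩ : ∃ r, p = 2 * (e + r) := ⟨p / 2 - e, by ring⟩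
  push_cast at hp
  have hr : 2 * (m : ℝ) + 1 < r := by linarith
  have hr₀ : 0 ≤ r := by linarith [m.cast_nonneg (α := ℝ)]
  have hg : StrictAbsMono (2 * (m + 1)) 0 (· ^ r) :=
    strictAbsMono_rpow hr₀ (by push_cast; linarith)
  set a := cosNode (π / (2 * (m + 1) + e + 1 : ℕ)) e with ha
  have hnode (j : ℕ) (hj : j ≤ m) : 0 < a j := cosNode_pi_div_pos (by lia)
  have hscale : (0 : ℝ) < 2⁻¹ ^ (2 * (e + r)) := by positivity
  refine ⟨_, PointedCone.smul_mem _ hscale.le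
    (pow_mul_hermiteInterpolant_mem_equispacedCone hg he (Nat.lt_succ_self _)),
    fun x ↦ 2⁻¹ ^ (2 * (e + r)) * hermiteQuotient (· ^ r) a (m + 1) (4 * cos x ^ 2),
    fun x ↦ mul_pos hscale (hg.hermiteQuotient_succ_pos hnode (by positivity)), fun x ↦ ?_⟩
  rw [abs_cos_rpow hr₀, eq_hermiteInterpolant_add (· ^ r) a (m + 1), Nat.add_sub_cancel,
    cosProd_two_mul_add, mul_pow (cosProd ..), cosProd_sq he, Pi.smul_apply, smul_eq_mul, ← ha]
  ring

lemma cosProd_equispacedAngles_sub {N : ℕ} {k l : Fin N} (hkl : k ≠ l) :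
    cosProd (π / N) (N - 1) (equispacedAngles N k - equispacedAngles N l) = 0 := by
  have : NeZero N := ⟨k.pos.ne'⟩
  refine cosProd_pi_div_eq_zero_iff.2 ⟨(k : ℤ) - l, fun hdvd ↦ hkl (Fin.ext ?_), ?_⟩
  · have := Int.eq_zero_of_abs_lt_dvd hdvd (by rw [abs_lt]; omega)
    lia
  · rw [equispacedAngles, equispacedAngles]
    push_cast
    ring

lemma pairEnergy_mul_cosProd_sq_equispacedAngles (N : ℕ) (R : ℝ → ℝ) :
    pairEnergy (fun x ↦ R x * cosProd (π / N) (N - 1) x ^ 2) (equispacedAngles N) = 0 :=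
  Finset.sum_eq_zero fun x hx ↦ by
    simp [cosProd_equispacedAngles_sub (Finset.mem_offDiag.1 hx).2.2]

lemma abs_cos_rpow_mem_equispacedCone {N : ℕ} (hN : 3 ≤ N) {p : ℝ} (hp : 2 * (N : ℝ) - 4 < p) :
    (fun x ↦ |cos x| ^ p) ∈ equispacedCone N := by
  obtain ⟨H, hH, R, hR, hHR⟩ := exists_abs_cos_rpow_eq_add hN hp
  rw [funext hHR]
  refine add_mem hH fun θ ↦ ?_
  rw [pairEnergy_mul_cosProd_sq_equispacedAngles]
  exact Finset.sum_nonneg fun x _ ↦ mul_nonneg (hR _).le (sq_nonneg _)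

lemma cosProd_sub_eq_zero_of_pairEnergy_le {N : ℕ} (hN : 3 ≤ N) {p : ℝ}
    (hp : 2 * (N : ℝ) - 4 < p) {θ : Fin N → ℝ}
    (hθ : pairEnergy (fun x ↦ |cos x| ^ p) θ ≤
      pairEnergy (fun x ↦ |cos x| ^ p) (equispacedAngles N)) {k l : Fin N} (hkl : k ≠ l) :
    cosProd (π / N) (N - 1) (θ k - θ l) = 0 := by
  obtain ⟨H, hH, R, hR, hHR⟩ := exists_abs_cos_rpow_eq_add hN hp
  have hnonneg (x : ℝ) : 0 ≤ R x * cosProd (π / N) (N - 1) x ^ 2 :=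
    mul_nonneg (hR x).le (sq_nonneg _)
  have hle : pairEnergy (fun x ↦ R x * cosProd (π / N) (N - 1) x ^ 2) θ ≤ 0 := by
    simp only [funext hHR, pairEnergy_add, pairEnergy_mul_cosProd_sq_equispacedAngles] at hθ
    linarith [hH θ]
  have hzero := (Finset.sum_eq_zero_iff_of_nonneg fun x _ ↦ hnonneg _).1
    (hle.antisymm (Finset.sum_nonneg fun x _ ↦ hnonneg _)) (k, l) (by simpa using hkl)
  simpa [(hR _).ne'] using hzero

end Minorant

section Plane

/-- The unit vector of the plane at angle `θ`. -/
noncomputable def unitVec (θ : ℝ) : EuclideanSpace ℝ (Fin 2) := !₂[cos θ, sin θ]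

lemma halfCircle_eq_unitVec (N : ℕ) (k : Fin N) : halfCircle N k = unitVec (equispacedAngles N k) :=
  rfl

lemma inner_unitVec (α β : ℝ) : ⟪unitVec α, unitVec β⟫ = cos (α - β) := by
  simp [unitVec, PiLp.inner_apply, cos_sub, mul_comm]

lemma unitVec_add_int_mul_pi (θ : ℝ) (z : ℤ) :
    unitVec (θ + z * π) = (-1 : ℝ) ^ z • unitVec θ := by
  ext i
  fin_cases i <;> simp [unitVec, cos_add_int_mul_pi, sin_add_int_mul_pi]

lemma orthonormalBasisOneI_repr_exp (θ : ℝ) :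
    Complex.orthonormalBasisOneI.repr (Complex.exp (θ * Complex.I)) = unitVec θ := by
  ext i
  fin_cases i <;> simp [unitVec, Complex.exp_ofReal_mul_I_re, Complex.exp_ofReal_mul_I_im]

lemma exists_eq_unitVec {v : EuclideanSpace ℝ (Fin 2)} (hv : ‖v‖ = 1) : ∃ θ, v = unitVec θ := by
  obtain ⟨z, rfl⟩ := Complex.orthonormalBasisOneI.repr.surjective v
  rw [LinearIsometryEquiv.norm_map] at hv
  refine ⟨z.arg, ?_⟩
  rw [← orthonormalBasisOneI_repr_exp, ← one_mul (Complex.exp _), ← Complex.ofReal_one, ← hv,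
    Complex.norm_mul_exp_arg_mul_I]

lemma exists_linearIsometryEquiv_unitVec (α : ℝ) :
    ∃ U : EuclideanSpace ℝ (Fin 2) ≃ₗᵢ[ℝ] EuclideanSpace ℝ (Fin 2),
      ∀ β, U (unitVec β) = unitVec (α + β) := by
  refine ⟨(Complex.orthonormalBasisOneI.repr.symm.trans (rotation (Circle.exp α))).trans
    Complex.orthonormalBasisOneI.repr, fun β ↦ ?_⟩
  rw [← orthonormalBasisOneI_repr_exp, ← orthonormalBasisOneI_repr_exp]
  simp [add_mul, Complex.exp_add]

lemma framePotential_unitVec (N : ℕ) (p : ℝ) (θ : Fin N → ℝ) :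
    framePotential 2 N p (fun k ↦ unitVec (θ k)) = pairEnergy (fun x ↦ |cos x| ^ p) θ := by
  simp only [framePotential, inner_unitVec]
  rw [← Fintype.sum_prod_type', ← Finset.sum_filter, pairEnergy]
  congr 1
  ext
  simp

lemma exists_perm_eq_emod {N : ℕ} [NeZero N] {z : Fin N → ℤ}
    (hz : ∀ k l, k ≠ l → ¬ (N : ℤ) ∣ z k - z l) :
    ∃ σ : Equiv.Perm (Fin N), ∀ k, (σ k : ℤ) = z k % N := by
  have hpos : (0 : ℤ) < N := by exact_mod_cast NeZero.pos N
  have hnonneg (k : Fin N) := Int.emod_nonneg (z k) hpos.ne'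
  let f (k : Fin N) : Fin N :=
    ⟨(z k % N).toNat, (Int.toNat_lt (hnonneg k)).2 (Int.emod_lt_of_pos _ hpos)⟩
  have hf (k : Fin N) : (f k : ℤ) = z k % N := Int.toNat_of_nonneg (hnonneg k)
  have hinj : Function.Injective f := fun k l hkl ↦ by
    by_contra hne
    refine hz k l hne (Int.ModEq.dvd ?_)
    rw [Int.ModEq, ← hf, ← hf, hkl]
  exact ⟨Equiv.ofBijective f (Finite.injective_iff_bijective.1 hinj), hf⟩

lemma exists_perm_equispacedAngles {N : ℕ} [NeZero N] {θ : Fin N → ℝ}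
    (hθ : ∀ k l, k ≠ l → cosProd (π / N) (N - 1) (θ k - θ l) = 0) :
    ∃ (α : ℝ) (σ : Equiv.Perm (Fin N)) (q : Fin N → ℤ),
      ∀ k, θ k = α + equispacedAngles N (σ k) + q k * π := by
  have hN : (N : ℝ) ≠ 0 := NeZero.ne _
  have hδ : π / N ≠ 0 := div_ne_zero pi_ne_zero hN
  have hint (k : Fin N) : ∃ z : ℤ, θ k = θ 0 + z * (π / N) := by
    rcases eq_or_ne k 0 with rfl | hk
    · exact ⟨0, by simp⟩
    · obtain ⟨y, -, hy⟩ := cosProd_pi_div_eq_zero_iff.1 (hθ k 0 hk)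
      exact ⟨y, by linarith⟩
  choose z hz using hint
  have hdvd (k l : Fin N) (hkl : k ≠ l) : ¬ (N : ℤ) ∣ z k - z l := by
    obtain ⟨y, hNy, hy⟩ := cosProd_pi_div_eq_zero_iff.1 (hθ k l hkl)
    rw [hz k, hz l, add_sub_add_left_eq_sub, ← sub_mul, mul_left_inj' hδ] at hy
    rwa [show z k - z l = y by exact_mod_cast hy]
  obtain ⟨σ, hσ⟩ := exists_perm_eq_emod hdvd
  refine ⟨θ 0, σ, fun k ↦ z k / N, fun k ↦ ?_⟩
  have hdiv : (z k : ℝ) = (σ k : ℕ) + N * (z k / N : ℤ) := by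
    exact_mod_cast (hσ k ▸ Int.emod_add_mul_ediv (z k) N).symm
  rw [hz k, hdiv, equispacedAngles]
  field_simp
  ring

lemma equivConfig_halfCircle_unitVec {N : ℕ} {θ : Fin N → ℝ} {α : ℝ} {σ : Equiv.Perm (Fin N)}
    {q : Fin N → ℤ} (hθ : ∀ k, θ k = α + equispacedAngles N (σ k) + q k * π) :
    EquivConfig 2 N (halfCircle N) (fun k ↦ unitVec (θ k)) := by
  obtain ⟨U, hU⟩ := exists_linearIsometryEquiv_unitVec α
  refine ⟨U, σ, fun k ↦ (-1) ^ q k, fun k ↦ ?_, fun k ↦ ?_⟩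
  · exact (Int.even_or_odd (q k)).imp Even.neg_one_zpow Odd.neg_one_zpow
  · simp only [hθ, unitVec_add_int_mul_pi, halfCircle_eq_unitVec, hU]

end Plane

theorem halfCircle_unique_minimizer_large_p_general
    (N : ℕ) (hN : 3 ≤ N) (p : ℝ) (hp : 2 * (N : ℝ) - 4 < p) :
    (∀ X : Fin N → EuclideanSpace ℝ (Fin 2), (∀ i, ‖X i‖ = 1) →
      framePotential 2 N p (halfCircle N) ≤ framePotential 2 N p X) ∧
    (∀ X : Fin N → EuclideanSpace ℝ (Fin 2), (∀ i, ‖X i‖ = 1) →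
      framePotential 2 N p X = framePotential 2 N p (halfCircle N) →
      EquivConfig 2 N (halfCircle N) X) := by
  have : NeZero N := ⟨by lia⟩
  have hangles (X : Fin N → EuclideanSpace ℝ (Fin 2)) (hX : ∀ i, ‖X i‖ = 1) :
      ∃ θ : Fin N → ℝ, X = fun k ↦ unitVec (θ k) := by
    choose θ hθ using fun k ↦ exists_eq_unitVec (hX k)
    exact ⟨θ, funext hθ⟩
  have hhalf : framePotential 2 N p (halfCircle N) =
      pairEnergy (fun x ↦ |cos x| ^ p) (equispacedAngles N) := framePotential_unitVec N p _
  constructor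
  · intro X hX
    obtain ⟨θ, rfl⟩ := hangles X hX
    rw [hhalf, framePotential_unitVec]
    exact abs_cos_rpow_mem_equispacedCone hN hp θ
  · intro X hX heq
    obtain ⟨θ, rfl⟩ := hangles X hX
    rw [hhalf, framePotential_unitVec] at heq
    obtain ⟨α, σ, q, hθ⟩ := exists_perm_equispacedAngles fun k l hkl ↦
      cosProd_sub_eq_zero_of_pairEnergy_le hN hp heq.le hkl
    exact equivConfig_halfCircle_unitVec hθ

/-- For `N ≥ 5` and `p > 2N−2` (`N` even) resp. `p > 2N−4` (`N` odd), `X_N^(h)` is the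
unique (up to equivalence) minimizer of the `p`-frame potential `FP_{p,N,2}` over
`S(N,2)`. -/
theorem halfCircle_unique_minimizer_large_p
    (N : ℕ) (hN : 5 ≤ N) (p : ℝ) (hp : 0 < p)
    (hpeven : Even N → 2 * (N : ℝ) - 2 < p)
    (hpodd : ¬ Even N → 2 * (N : ℝ) - 4 < p) :
    (∀ X : Fin N → EuclideanSpace ℝ (Fin 2), (∀ i, ‖X i‖ = 1) →
      framePotential 2 N p (halfCircle N) ≤ framePotential 2 N p X) ∧
    (∀ X : Fin N → EuclideanSpace ℝ (Fin 2), (∀ i, ‖X i‖ = 1) →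
      framePotential 2 N p X = framePotential 2 N p (halfCircle N) →
      EquivConfig 2 N (halfCircle N) X) := by
  refine halfCircle_unique_minimizer_large_p_general N (by lia) p ?_
  by_cases hN_even : Even N
  · linarith [hpeven hN_even]
  · exact hpodd hN_even
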